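/- Let k be a field of characteristic different from 2 and 3 and a1, a2 ∈ k, with A and B as follows: A = −48 − 128·a2 − 648·a2² + 3456·a1·a2 − 648·a2³ + 1944·a1·a2² − 243·a2⁴ + 3168·a1 − 3888·a1², B = 512·a2 − 2400·a2² + 46080·a1·a2 − 7200·a2³ + 77760·a1·a2² − 9720·a2⁴ − 124416·a1²·a2 + 54432·a1·a2³ − 5832·a2⁵ − 69984·a1²·a2² + 17496·a1·a2⁴ − 1458·a2⁶ + 128 + 19328·a1 − 120960·a1² + 93312·a1³. Assume the curves E1 : y² = x³ + A1·x + B1 with A1 = −(3 + 2·a2), B1 = −4·a1 + 2 + 2·a2 + a2², and E2 : y² = x³ + A·x + B are nonsingular. Let f3(x) = 3·x⁴ + 6·A1·x² + 12·B1·x − A1² and g3(x) = 3·x⁴ + 6·A·x² + 12·B·x − A². Then there exist a, b, c, d ∈ k with a·d − b·c ≠ 0 such that for every root r of f3 in an algebraic closure of k one has c·r + d ≠ 0 and g3((a·r + b)/(c·r + d)) = 0; moreover r ↦ (a·r + b)/(c·r + d) is a bijection from the roots of f3 onto the roots of g3. -/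

import Mathlib

/-!
The flexes of the plane cubic `F = y²z - x³ - A₁xz² - B₁z³` are the 3-torsion points of `E1`, and
they are also flexes of every smooth member of the Hesse pencil `λF + μ Hess(F)/8`. All these
members are symmetric under `y ↦ -y`, so putting the tangent at the flex `O = [0 : 1 : 0]` at
infinity and completing to a short Weierstrass equation changes the abscissa by a homography of
the `x`-line, which carries the abscissas of the 3-torsion of `E1` onto those of the new curve.

The curve `E2` is exactly the member `(λ : μ) = (1 : -1)`. There the tangent at `O` is `z - 3x = 0`,
and with `D = 1 + 18A₁ + 108B₁ - 27A₁²` and `e = 3A₁ + 27B₁ - 9A₁²` the homography is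
`x ↦ D x / (1 - 3x) + e`, of determinant `D = 27 f₃(1/3)`. The identity
`4A³ + 27B² = D³ (4A₁³ + 27B₁²)` shows that `D ≠ 0` since `E2` is nonsingular, and the homogenized
quartics satisfy `g₃ ∘ M = D³ f₃`. A homography relating two quartics in this way, neither of which
vanishes at infinity, restricts to a bijection between their roots.
-/

lemma quartic_div_eq_zero {K : Type*} [Field K] (A B n w : K) (hw : w ≠ 0)
    (h : 3 * n ^ 4 + 6 * A * n ^ 2 * w ^ 2 + 12 * B * n * w ^ 3 - A ^ 2 * w ^ 4 = 0) :
    3 * (n / w) ^ 4 + 6 * A * (n / w) ^ 2 + 12 * B * (n / w) - A ^ 2 = 0 := by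
  obtain ⟨t, rfl⟩ : ∃ t, n = t * w := ⟨n / w, by field_simp⟩
  rw [mul_div_cancel_right₀ _ hw]
  refine (mul_eq_zero.mp ?_).resolve_left (pow_ne_zero 4 hw)
  linear_combination h

/-- An invertible homography carrying the homogenization of the quartic `3x⁴ + 6Ax² + 12Bx - A²` to
a nonzero multiple of that of `3x⁴ + 6A'x² + 12B'x - A'²` induces a bijection of the affine roots:
the leading coefficient `3` is nonzero, so no root lies at infinity on either side. -/
lemma bijOn_roots_of_homography {K : Type*} [Field K] (h3 : (3 : K) ≠ 0)
    (A B A' B' a b c d C : K) (hdet : a * d - b * c ≠ 0) (hC : C ≠ 0)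
    (h : ∀ x z : K,
      3 * (a * x + b * z) ^ 4 + 6 * A' * (a * x + b * z) ^ 2 * (c * x + d * z) ^ 2
        + 12 * B' * (a * x + b * z) * (c * x + d * z) ^ 3 - A' ^ 2 * (c * x + d * z) ^ 4
      = C * (3 * x ^ 4 + 6 * A * x ^ 2 * z ^ 2 + 12 * B * x * z ^ 3 - A ^ 2 * z ^ 4)) :
    (∀ r : K, 3 * r ^ 4 + 6 * A * r ^ 2 + 12 * B * r - A ^ 2 = 0 → c * r + d ≠ 0) ∧
    Set.BijOn (fun r : K => (a * r + b) / (c * r + d))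
      {r | 3 * r ^ 4 + 6 * A * r ^ 2 + 12 * B * r - A ^ 2 = 0}
      {r | 3 * r ^ 4 + 6 * A' * r ^ 2 + 12 * B' * r - A' ^ 2 = 0} := by
  have hden : ∀ r : K, 3 * r ^ 4 + 6 * A * r ^ 2 + 12 * B * r - A ^ 2 = 0 → c * r + d ≠ 0 := by
    intro r hr h0
    have h1 := h r 1
    simp only [mul_one, one_pow, hr, h0] at h1
    have h4 : 3 * (a * r + b) ^ 4 = 0 := by linear_combination h1
    have h5 : a * r + b = 0 := by simpa [h3] using h4
    have hr0 : (a * d - b * c) * r = 0 := by linear_combination d * h5 - b * h0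
    have hr1 : a * d - b * c = 0 := by linear_combination a * h0 - c * h5
    exact hdet hr1
  refine ⟨hden, ?_, ?_, ?_⟩
  · intro r hr
    have hw := hden r hr
    have h1 := h r 1
    simp only [Set.mem_ofPred_eq, mul_one, one_pow] at hr h1 ⊢
    rw [hr, mul_zero] at h1
    exact quartic_div_eq_zero A' B' _ _ hw h1
  · intro r hr s hs hrs
    have hw := hden r hr
    have hv := hden s hs
    simp only at hrs
    rw [div_eq_div_iff hw hv] at hrs
    have : (a * d - b * c) * (r - s) = 0 := by linear_combination hrs
    exact sub_eq_zero.mp ((mul_eq_zero.mp this).resolve_left hdet)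
  · intro X hX
    simp only [Set.mem_ofPred_eq] at hX
    -- The adjugate of the homography inverts it on homogeneous coordinates.
    have h1 := h (d * X - b) (a - c * X)
    have e1 : a * (d * X - b) + b * (a - c * X) = (a * d - b * c) * X := by ring
    have e2 : c * (d * X - b) + d * (a - c * X) = a * d - b * c := by ring
    rw [e1, e2] at h1
    have h2 : 3 * (d * X - b) ^ 4 + 6 * A * (d * X - b) ^ 2 * (a - c * X) ^ 2
        + 12 * B * (d * X - b) * (a - c * X) ^ 3 - A ^ 2 * (a - c * X) ^ 4 = 0 := by
      refine (mul_eq_zero.mp ?_).resolve_left hC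
      linear_combination (a * d - b * c) ^ 4 * hX - h1
    have hw : a - c * X ≠ 0 := by
      intro h0
      rw [h0] at h2
      have h4 : 3 * (d * X - b) ^ 4 = 0 := by linear_combination h2
      have h5 : d * X - b = 0 := by simpa [h3] using h4
      exact hdet (by linear_combination d * h0 + c * h5)
    have hr : 3 * ((d * X - b) / (a - c * X)) ^ 4 + 6 * A * ((d * X - b) / (a - c * X)) ^ 2
        + 12 * B * ((d * X - b) / (a - c * X)) - A ^ 2 = 0 :=
      quartic_div_eq_zero A B _ _ hw h2
    refine ⟨(d * X - b) / (a - c * X), hr, ?_⟩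
    have hv := hden _ hr
    simp only
    rw [div_eq_iff hv]
    linear_combination div_mul_cancel₀ (d * X - b) hw

theorem stmt_3 (k : Type*) [Field k] (h2 : (2 : k) ≠ 0) (h3 : (3 : k) ≠ 0)
    (a1 a2 A B A1 B1 : k)
    (hA : A = -48 - 128 * a2 - 648 * a2 ^ 2 + 3456 * a1 * a2 - 648 * a2 ^ 3
      + 1944 * a1 * a2 ^ 2 - 243 * a2 ^ 4 + 3168 * a1 - 3888 * a1 ^ 2)
    (hB : B = 512 * a2 - 2400 * a2 ^ 2 + 46080 * a1 * a2 - 7200 * a2 ^ 3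
      + 77760 * a1 * a2 ^ 2 - 9720 * a2 ^ 4 - 124416 * a1 ^ 2 * a2 + 54432 * a1 * a2 ^ 3
      - 5832 * a2 ^ 5 - 69984 * a1 ^ 2 * a2 ^ 2 + 17496 * a1 * a2 ^ 4 - 1458 * a2 ^ 6
      + 128 + 19328 * a1 - 120960 * a1 ^ 2 + 93312 * a1 ^ 3)
    (hA1 : A1 = -(3 + 2 * a2)) (hB1 : B1 = -4 * a1 + 2 + 2 * a2 + a2 ^ 2)
    -- nonsingularity of E1 : y² = x³ + A1·x + B1 and E2 : y² = x³ + A·x + B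
    (hE1 : (⟨0, 0, 0, A1, B1⟩ : WeierstrassCurve k).Δ ≠ 0)
    (hE2 : (⟨0, 0, 0, A, B⟩ : WeierstrassCurve k).Δ ≠ 0)
    (K : Type*) [Field K] [Algebra k K] [IsAlgClosure k K]
    (f3 g3 : K → K)
    (hf3 : ∀ x, f3 x = 3 * x ^ 4 + 6 * algebraMap k K A1 * x ^ 2
      + 12 * algebraMap k K B1 * x - (algebraMap k K A1) ^ 2)
    (hg3 : ∀ x, g3 x = 3 * x ^ 4 + 6 * algebraMap k K A * x ^ 2
      + 12 * algebraMap k K B * x - (algebraMap k K A) ^ 2) :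
    ∃ a b c d : k, a * d - b * c ≠ 0 ∧
      (∀ r : K, f3 r = 0 →
        algebraMap k K c * r + algebraMap k K d ≠ 0 ∧
        g3 ((algebraMap k K a * r + algebraMap k K b) /
          (algebraMap k K c * r + algebraMap k K d)) = 0) ∧
      Set.BijOn
        (fun r : K => (algebraMap k K a * r + algebraMap k K b) /
          (algebraMap k K c * r + algebraMap k K d))
        {r : K | f3 r = 0} {r : K | g3 r = 0} := by
    -- `D` and `e` are the coefficients of the homography `x ↦ D x / (1 - 3x) + e`.
  obtain ⟨D, hD⟩ : ∃ D, D = 1 + 18 * A1 + 108 * B1 - 27 * A1 ^ 2 := ⟨_, rfl⟩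
  obtain ⟨e, he⟩ : ∃ e, e = 3 * A1 + 27 * B1 - 9 * A1 ^ 2 := ⟨_, rfl⟩
  -- The member `(1 : -1)` of the Hesse pencil, in short Weierstrass form, is `E2`.
  have hA' : A = (A1 + 18 * B1 - 9 * A1 ^ 2) * D - 3 * e ^ 2 := by
    subst hD he hA1 hB1 hA; ring
  have hB' : B = (B1 - A1 ^ 2) * D ^ 2 - e * (A1 + 18 * B1 - 9 * A1 ^ 2) * D + 2 * e ^ 3 := by
    subst hD he hA1 hB1 hB; ring
  clear hA hB hA1 hB1
  have hdisc : 4 * A ^ 3 + 27 * B ^ 2 = D ^ 3 * (4 * A1 ^ 3 + 27 * B1 ^ 2) := by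
    subst hA' hB' hD he; ring
  have hD0 : D ≠ 0 := by
    intro h0
    apply hE2
    simp only [WeierstrassCurve.Δ, WeierstrassCurve.b₂, WeierstrassCurve.b₄,
      WeierstrassCurve.b₆, WeierstrassCurve.b₈]
    rw [h0] at hdisc
    linear_combination -16 * hdisc
  have h3K : (3 : K) ≠ 0 := by
    rw [← map_ofNat (algebraMap k K) 3]
    exact (map_ne_zero _).mpr h3
  obtain ⟨hden, hbij⟩ := bijOn_roots_of_homography h3K
    (algebraMap k K A1) (algebraMap k K B1) (algebraMap k K A) (algebraMap k K B)
    (algebraMap k K (D - 3 * e)) (algebraMap k K e) (algebraMap k K (-3)) (algebraMap k K 1)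
    (algebraMap k K (D ^ 3))
    (by
      rw [← map_mul, ← map_mul, ← map_sub]
      refine (map_ne_zero _).mpr ?_
      convert hD0 using 1
      ring)
    ((map_ne_zero _).mpr (pow_ne_zero _ hD0))
    (by
      intro x z
      subst hA' hB' hD he
      simp only [map_add, map_sub, map_mul, map_pow, map_neg, map_one, map_ofNat]
      ring)
  simp only [← hf3, ← hg3] at hden hbij
  refine ⟨D - 3 * e, e, -3, 1, ?_, fun r hr => ⟨hden r hr, hbij.mapsTo hr⟩, hbij⟩
  convert hD0 using 1
  ring
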